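/- For all i, j ∈ {1, …, 21}, ⟨σ^{i−1} y, σ^{j−1} y⟩ = A_{i,j}; in particular ⟨y, y⟩ = 1, i.e., 3α² − β² = 1. -/

import Mathlib

/-!
Each power of `σ` rotates the three planes, so
`⟨σ^i y, σ^j y⟩ = α² P(i - j) - β²` with `P(k) = cos kθ + cos 4kθ + cos 5kθ`, `θ = 2π/21`.

The set `{±1, ±4, ±5}` is an index-two subgroup of `(ℤ/21)ˣ`, so `P` is constant on its orbits
in `ℤ/21` (`cosSum_eq_of_mem`); these orbits are `{0}`, `{±7}` and the orbits of `1`, `2`, `3`,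
which is exactly the case distinction defining `A`. It remains to find five values of `P`,
which are halves of Gaussian periods: `P(0) = 3`, `P(7) = -3/2`, and, from the product formula
`2 cos a cos b = cos (a + b) + cos (a - b)`,

* `2 P(3)² - 5 P(3) - 3 = 0`, whence `P(3) = -1/2` because `P(3) < 3`;
* `P(1) + P(2) + P(3) = 0`, from `cos a + cos (a + 2π/3) + cos (a - 2π/3) = 0`;
* `P(1)² = P(1) + P(2)/2 + P(3) + 3/2`, whence `P(1) = (1 + √21)/4` because `P(1) > 0`.
-/

open Real Matrix

noncomputable section

/-- `c m = cos (2mπ/21)`. -/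
def c (m : ℝ) : ℝ := Real.cos (2 * m * Real.pi / 21)

/-- `s m = sin (2mπ/21)`. -/
def s (m : ℝ) : ℝ := Real.sin (2 * m * Real.pi / 21)

/-- The 7×7 block-diagonal matrix with rotation blocks `R₁, R₄, R₅` (rotation by `2mπ/21`)
and the 1×1 block `(1)`. -/
def sigmaMat : Matrix (Fin 7) (Fin 7) ℝ :=
  !![c 1, -s 1, 0,    0,    0,    0,    0;
     s 1,  c 1, 0,    0,    0,    0,    0;
     0,    0,   c 4, -s 4,  0,    0,    0;
     0,    0,   s 4,  c 4,  0,    0,    0;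
     0,    0,   0,    0,    c 5, -s 5,  0;
     0,    0,   0,    0,    s 5,  c 5,  0;
     0,    0,   0,    0,    0,    0,    1]

/-- The Minkowski bilinear form on `ℝ⁷`:
`⟨x, y⟩ = x₁y₁ + x₂y₂ + x₃y₃ + x₄y₄ + x₅y₅ + x₆y₆ − x₇y₇`. -/
def mink (x y : Fin 7 → ℝ) : ℝ :=
  x 0 * y 0 + x 1 * y 1 + x 2 * y 2 + x 3 * y 3 + x 4 * y 4 + x 5 * y 5 - x 6 * y 6

def u : ℝ := (27 + 7 * Real.sqrt 21) / 50
def v : ℝ := (21 + 11 * Real.sqrt 21) / 50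
def w : ℝ := (49 + 9 * Real.sqrt 21) / 50

/-- The 21×21 Gram matrix `A` of the polytope `P₂₁ ⊂ H⁶`. -/
def A : Matrix (Fin 21) (Fin 21) ℝ := fun i j =>
  let d : ZMod 21 := (i.val : ZMod 21) - (j.val : ZMod 21)
  if d = 0 then 1
  else if d ∈ ({1, -1, 4, -4, 5, -5} : Finset (ZMod 21)) then 0
  else if d ∈ ({3, -3, 6, -6, 9, -9} : Finset (ZMod 21)) then -u
  else if d ∈ ({2, -2, 8, -8, 10, -10} : Finset (ZMod 21)) then -v
  else -w  -- this case occurs exactly when `d = ±7 (mod 21)`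

def α : ℝ := (1 / 5) * Real.sqrt (11 + Real.sqrt 21)
def β : ℝ := (1 / 5) * Real.sqrt (8 + 3 * Real.sqrt 21)

/-- The vector `y = (α, 0, α, 0, α, 0, β) ∈ ℝ⁷`. -/
def y : Fin 7 → ℝ := ![α, 0, α, 0, α, 0, β]

end

noncomputable section

/-- `cos (2kπ/21)` for an integer `k`. -/
def cosInt (k : ℤ) : ℝ := Real.cos (2 * k * Real.pi / 21)

/-- The sum `P(k) = cos kθ + cos 4kθ + cos 5kθ` with `θ = 2π/21`; for `k` prime to `21` it is half
of a Gaussian period. -/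
def cosSum (k : ℤ) : ℝ := cosInt k + cosInt (4 * k) + cosInt (5 * k)

end

/-! ### Reduction to the sums `cosSum` -/

lemma sigmaMat_pow_mulVec_y (n : ℕ) :
    sigmaMat ^ n *ᵥ y =
      ![α * Real.cos (n * (2 * 1 * Real.pi / 21)), α * Real.sin (n * (2 * 1 * Real.pi / 21)),
        α * Real.cos (n * (2 * 4 * Real.pi / 21)), α * Real.sin (n * (2 * 4 * Real.pi / 21)),
        α * Real.cos (n * (2 * 5 * Real.pi / 21)), α * Real.sin (n * (2 * 5 * Real.pi / 21)),
        β] := by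
  induction n with
  | zero => simp [y]
  | succ n ih =>
    rw [pow_succ', ← Matrix.mulVec_mulVec, ih]
    push_cast
    simp only [add_mul, one_mul, Real.cos_add, Real.sin_add]
    ext i
    fin_cases i <;>
      simp [sigmaMat, c, s, Matrix.mulVec, dotProduct, Fin.sum_univ_succ] <;> ring

lemma mink_orbit (i j : ℕ) :
    mink (sigmaMat ^ i *ᵥ y) (sigmaMat ^ j *ᵥ y) = α ^ 2 * cosSum ((i : ℤ) - j) - β ^ 2 := by
  have h (m : ℝ) : Real.cos (i * (2 * m * Real.pi / 21)) * Real.cos (j * (2 * m * Real.pi / 21))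
      + Real.sin (i * (2 * m * Real.pi / 21)) * Real.sin (j * (2 * m * Real.pi / 21))
      = Real.cos (2 * (m * (i - j)) * Real.pi / 21) := by
    rw [← Real.cos_sub]
    congr 1
    ring
  have h1 := h 1
  have h4 := h 4
  have h5 := h 5
  rw [sigmaMat_pow_mulVec_y, sigmaMat_pow_mulVec_y]
  simp only [cosSum, cosInt]
  push_cast
  rw [one_mul] at h1
  rw [← h1, ← h4, ← h5]
  simp [mink]
  ring

/-! ### Symmetries of the cosines -/

lemma cosInt_neg (k : ℤ) : cosInt (-k) = cosInt k := by
  unfold cosInt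
  rw [← Real.cos_neg]
  push_cast
  congr 1
  ring

lemma cosInt_eq_of_dvd_sub {k m : ℤ} (h : (21 : ℤ) ∣ k - m) : cosInt k = cosInt m := by
  obtain ⟨q, hq⟩ := h
  obtain rfl : k = m + 21 * q := by omega
  unfold cosInt
  rw [← Real.cos_add_int_mul_two_pi (2 * m * Real.pi / 21) q]
  push_cast
  congr 1
  ring

lemma cosInt_eq_of_dvd_add {k m : ℤ} (h : (21 : ℤ) ∣ k + m) : cosInt k = cosInt m := by
  rw [← cosInt_neg m]
  exact cosInt_eq_of_dvd_sub (by simpa using h)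

lemma two_mul_cosInt_mul (a b : ℤ) :
    2 * (cosInt a * cosInt b) = cosInt (a + b) + cosInt (a - b) := by
  simp only [cosInt]
  push_cast
  have h1 : 2 * ((a : ℝ) + b) * Real.pi / 21 = 2 * a * Real.pi / 21 + 2 * b * Real.pi / 21 := by
    ring
  have h2 : 2 * ((a : ℝ) - b) * Real.pi / 21 = 2 * a * Real.pi / 21 - 2 * b * Real.pi / 21 := by
    ring
  rw [h1, h2, Real.cos_add, Real.cos_sub]
  ring

/-- `cosSum` is invariant under multiplication by the subgroup `{±1, ±4, ±5}` of `(ℤ/21)ˣ`. -/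
lemma cosSum_eq_of_mem {k m : ℤ}
    (h : (21 : ℤ) ∣ k - m ∨ (21 : ℤ) ∣ k + m ∨ (21 : ℤ) ∣ k - 4 * m ∨ (21 : ℤ) ∣ k + 4 * m ∨
      (21 : ℤ) ∣ k - 5 * m ∨ (21 : ℤ) ∣ k + 5 * m) : cosSum k = cosSum m := by
  unfold cosSum
  rcases h with h | h | h | h | h | h
  · rw [cosInt_eq_of_dvd_sub h, cosInt_eq_of_dvd_sub (k := 4 * k) (m := 4 * m) (by omega),
      cosInt_eq_of_dvd_sub (k := 5 * k) (m := 5 * m) (by omega)]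
  · rw [cosInt_eq_of_dvd_add h, cosInt_eq_of_dvd_add (k := 4 * k) (m := 4 * m) (by omega),
      cosInt_eq_of_dvd_add (k := 5 * k) (m := 5 * m) (by omega)]
  -- modulo sign and `21`, multiplication by `4` acts as the cycle `1 ↦ 4 ↦ 5 ↦ 1`
  · rw [cosInt_eq_of_dvd_sub h, cosInt_eq_of_dvd_add (k := 4 * k) (m := 5 * m) (by omega),
      cosInt_eq_of_dvd_add (k := 5 * k) (m := m) (by omega)]
    ring
  · rw [cosInt_eq_of_dvd_add h, cosInt_eq_of_dvd_sub (k := 4 * k) (m := 5 * m) (by omega),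
      cosInt_eq_of_dvd_sub (k := 5 * k) (m := m) (by omega)]
    ring
  · rw [cosInt_eq_of_dvd_sub h, cosInt_eq_of_dvd_add (k := 4 * k) (m := m) (by omega),
      cosInt_eq_of_dvd_sub (k := 5 * k) (m := 4 * m) (by omega)]
    ring
  · rw [cosInt_eq_of_dvd_add h, cosInt_eq_of_dvd_sub (k := 4 * k) (m := m) (by omega),
      cosInt_eq_of_dvd_add (k := 5 * k) (m := 4 * m) (by omega)]
    ring

/-! ### The values of `cosSum` -/

lemma cosInt_zero : cosInt 0 = 1 := by simp [cosInt]

lemma cosInt_seven : cosInt 7 = -1 / 2 := by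
  unfold cosInt
  have h : 2 * ((7 : ℤ) : ℝ) * Real.pi / 21 = Real.pi - Real.pi / 3 := by
    push_cast
    ring
  rw [h, Real.cos_pi_sub, Real.cos_pi_div_three]
  ring

lemma cosSum_zero : cosSum 0 = 3 := by
  norm_num [cosSum, cosInt_zero]

lemma cosSum_seven : cosSum 7 = -3 / 2 := by
  unfold cosSum
  rw [cosInt_eq_of_dvd_sub (k := 4 * 7) (m := 7) (by norm_num),
    cosInt_eq_of_dvd_add (k := 5 * 7) (m := 7) (by norm_num), cosInt_seven]
  norm_num

lemma cosSum_one_eq : cosSum 1 = cosInt 1 + cosInt 4 + cosInt 5 := by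
  norm_num [cosSum]

lemma cosSum_two_eq : cosSum 2 = cosInt 2 + cosInt 8 + cosInt 10 := by
  norm_num [cosSum]

lemma cosSum_three_eq : cosSum 3 = cosInt 3 + cosInt 6 + cosInt 9 := by
  unfold cosSum
  rw [cosInt_eq_of_dvd_add (k := 4 * 3) (m := 9) (by norm_num),
    cosInt_eq_of_dvd_add (k := 5 * 3) (m := 6) (by norm_num)]
  ring

lemma cosSum_three : cosSum 3 = -1 / 2 := by
  have h33 := two_mul_cosInt_mul 3 3
  have h66 := two_mul_cosInt_mul 6 6
  have h99 := two_mul_cosInt_mul 9 9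
  have h63 := two_mul_cosInt_mul 6 3
  have h93 := two_mul_cosInt_mul 9 3
  have h96 := two_mul_cosInt_mul 9 6
  norm_num [cosInt_zero] at h33 h66 h99 h63 h93 h96
  have e12 : cosInt 12 = cosInt 9 := cosInt_eq_of_dvd_add (by norm_num)
  have e15 : cosInt 15 = cosInt 6 := cosInt_eq_of_dvd_add (by norm_num)
  have e18 : cosInt 18 = cosInt 3 := cosInt_eq_of_dvd_add (by norm_num)
  rw [e12] at h66 h93
  rw [e15] at h96
  rw [e18] at h99
  have hquad : (2 * cosSum 3 + 1) * (cosSum 3 - 3) = 0 := by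
    rw [cosSum_three_eq]
    linear_combination h33 + h66 + h99 + 2 * h63 + 2 * h93 + 2 * h96
  have h9 : cosInt 9 < 0 := by
    unfold cosInt
    apply Real.cos_neg_of_pi_div_two_lt_of_lt <;> push_cast <;> linarith [Real.pi_pos]
  have hlt : cosSum 3 < 3 := by
    have h3 : cosInt 3 ≤ 1 := Real.cos_le_one _
    have h6 : cosInt 6 ≤ 1 := Real.cos_le_one _
    rw [cosSum_three_eq]
    linarith
  rcases mul_eq_zero.mp hquad with h | h <;> linarith

lemma cosSum_one_add_two_add_three : cosSum 1 + cosSum 2 + cosSum 3 = 0 := by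
  have h1 := two_mul_cosInt_mul 7 1
  have h2 := two_mul_cosInt_mul 7 2
  have h3 := two_mul_cosInt_mul 7 3
  norm_num [cosInt_seven] at h1 h2 h3
  rw [cosSum_one_eq, cosSum_two_eq, cosSum_three_eq]
  linarith

lemma cosSum_one : cosSum 1 = (1 + Real.sqrt 21) / 4 := by
  have h11 := two_mul_cosInt_mul 1 1
  have h44 := two_mul_cosInt_mul 4 4
  have h55 := two_mul_cosInt_mul 5 5
  have h41 := two_mul_cosInt_mul 4 1
  have h51 := two_mul_cosInt_mul 5 1
  have h54 := two_mul_cosInt_mul 5 4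
  norm_num [cosInt_zero] at h11 h44 h55 h41 h51 h54
  have hsum := cosSum_one_add_two_add_three
  have h3 := cosSum_three
  have hsq : cosSum 1 ^ 2 = cosSum 1 + cosSum 2 / 2 + cosSum 3 + 3 / 2 := by
    rw [cosSum_one_eq, cosSum_two_eq, cosSum_three_eq]
    linear_combination h11 / 2 + h44 / 2 + h55 / 2 + h41 + h51 + h54
  have hpos : 0 < cosSum 1 := by
    rw [cosSum_one_eq]
    have p (k : ℤ) (h0 : 0 ≤ k) (h5 : k ≤ 5) : 0 < cosInt k := by
      unfold cosInt
      have h0' : (0 : ℝ) ≤ k := by exact_mod_cast h0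
      have h5' : (k : ℝ) ≤ 5 := by exact_mod_cast h5
      apply Real.cos_pos_of_mem_Ioo
      constructor <;> nlinarith [Real.pi_pos]
    linarith [p 1 (by norm_num) (by norm_num), p 4 (by norm_num) (by norm_num),
      p 5 (by norm_num) (by norm_num)]
  have hr : Real.sqrt 21 ^ 2 = 21 := Real.sq_sqrt (by norm_num)
  have hr1 : 1 < Real.sqrt 21 := Real.lt_sqrt_of_sq_lt (by norm_num)
  have hfac : (4 * cosSum 1 - 1 - Real.sqrt 21) * (4 * cosSum 1 - 1 + Real.sqrt 21) = 0 := by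
    linear_combination 16 * hsq - hr + 8 * hsum + 8 * h3
  rcases mul_eq_zero.mp hfac with h | h <;> linarith

lemma cosSum_two : cosSum 2 = (1 - Real.sqrt 21) / 4 := by
  linarith [cosSum_one_add_two_add_three, cosSum_three, cosSum_one]

/-! ### The Gram matrix -/

lemma α_sq : α ^ 2 = (11 + Real.sqrt 21) / 25 := by
  unfold α
  rw [mul_pow, Real.sq_sqrt (by positivity)]
  ring

lemma β_sq : β ^ 2 = (8 + 3 * Real.sqrt 21) / 25 := by
  unfold β
  rw [mul_pow, Real.sq_sqrt (by positivity)]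
  ring

lemma cosSum_eq_A (i j : Fin 21) :
    α ^ 2 * cosSum (((i : ℕ) : ℤ) - ((j : ℕ) : ℤ)) - β ^ 2 = A i j := by
  have hr : Real.sqrt 21 ^ 2 = 21 := Real.sq_sqrt (by norm_num)
  obtain ⟨k, hk⟩ : ∃ k : ℤ, k = ((i : ℕ) : ℤ) - ((j : ℕ) : ℤ) := ⟨_, rfl⟩
  have hd : (((i : ℕ) : ZMod 21) - ((j : ℕ) : ZMod 21)) = (k : ZMod 21) := by
    rw [hk]
    push_cast
    rfl
  have hdvd (m : ℤ) (h : (k : ZMod 21) = (m : ZMod 21)) : (21 : ℤ) ∣ k - m := by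
    rw [← sub_eq_zero, ← Int.cast_sub] at h
    exact (ZMod.intCast_zmod_eq_zero_iff_dvd _ 21).mp h
  rw [← hk, α_sq, β_sq]
  simp only [A, hd]
  split_ifs with h0 h1 h3 h2
  · have := hdvd 0 (by simpa using h0)
    rw [cosSum_eq_of_mem (k := k) (m := 0) (by omega), cosSum_zero]
    ring
  · rw [cosSum_eq_of_mem (k := k) (m := 1), cosSum_one]
    · linear_combination hr / 100
    · simp only [Finset.mem_insert, Finset.mem_singleton] at h1
      rcases h1 with h | h | h | h | h | h
      · have := hdvd 1 (by simpa using h)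
        omega
      · have := hdvd (-1) (by simpa using h)
        omega
      · have := hdvd 4 (by simpa using h)
        omega
      · have := hdvd (-4) (by simpa using h)
        omega
      · have := hdvd 5 (by simpa using h)
        omega
      · have := hdvd (-5) (by simpa using h)
        omega
  · rw [cosSum_eq_of_mem (k := k) (m := 3), cosSum_three, u]
    · ring
    · simp only [Finset.mem_insert, Finset.mem_singleton] at h3
      rcases h3 with h | h | h | h | h | h
      · have := hdvd 3 (by simpa using h)
        omega
      · have := hdvd (-3) (by simpa using h)
        omega
      · have := hdvd 6 (by simpa using h)
        omega
      · have := hdvd (-6) (by simpa using h)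
        omega
      · have := hdvd 9 (by simpa using h)
        omega
      · have := hdvd (-9) (by simpa using h)
        omega
  · rw [cosSum_eq_of_mem (k := k) (m := 2), cosSum_two, v]
    · linear_combination -hr / 100
    · simp only [Finset.mem_insert, Finset.mem_singleton] at h2
      rcases h2 with h | h | h | h | h | h
      · have := hdvd 2 (by simpa using h)
        omega
      · have := hdvd (-2) (by simpa using h)
        omega
      · have := hdvd 8 (by simpa using h)
        omega
      · have := hdvd (-8) (by simpa using h)
        omega
      · have := hdvd 10 (by simpa using h)
        omega
      · have := hdvd (-10) (by simpa using h)
        omega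
  · -- the only residues left are `±7`
    have key : ∀ d : ZMod 21, d ≠ 0 → d ∉ ({1, -1, 4, -4, 5, -5} : Finset (ZMod 21)) →
        d ∉ ({3, -3, 6, -6, 9, -9} : Finset (ZMod 21)) →
        d ∉ ({2, -2, 8, -8, 10, -10} : Finset (ZMod 21)) → d = 7 ∨ d = -7 := by
      decide
    rw [cosSum_eq_of_mem (k := k) (m := 7), cosSum_seven, w]
    · ring
    · rcases key _ h0 h1 h3 h2 with h | h
      · have := hdvd 7 (by simpa using h)
        omega
      · have := hdvd (-7) (by simpa using h)
        omega

theorem gram_matrix_of_orbit :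
    (∀ i j : Fin 21, mink (sigmaMat ^ (i : ℕ) *ᵥ y) (sigmaMat ^ (j : ℕ) *ᵥ y) = A i j) ∧
    mink y y = 1 ∧ 3 * α ^ 2 - β ^ 2 = 1 := by
  have hαβ : 3 * α ^ 2 - β ^ 2 = 1 := by
    rw [α_sq, β_sq]
    ring
  refine ⟨fun i j => (mink_orbit i j).trans (cosSum_eq_A i j), ?_, hαβ⟩
  rw [← hαβ]
  simp [mink, y]
  ring
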